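/- arXiv:1110.2403 — 2 statements merged into one kernel-verified Lean document; each statement's English description precedes it below -/
import Mathlib

section
/- Let α, β ∈ ℂ with Im(α + β) = 0 and Re(α + β) > 0, let c > 0, and let φ ∈ [0, 2π). Then the function u(t,x) = e^{iφ}·√(c/(α+β))·( 1 − 12/(3 + 2·c·(x − c·t)²) ) is smooth on ℝ×ℝ and satisfies the complex mKdV equation u_t + α·conj(u)·u·u_x + β·u²·conj(u)_x + u_xxx = 0 at every point (t,x) ∈ ℝ×ℝ. -/
/-- Left-hand side of the complex mKdV equation (γ = 1):
`u_t + α·conj(u)·u·u_x + β·u²·conj(u)_x + u_xxx`. -/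
noncomputable def mkdvLHS (α β : ℂ) (u : ℝ → ℝ → ℂ) (t x : ℝ) : ℂ :=
  deriv (fun s => u s x) t
    + α * (starRingEnd ℂ) (u t x) * u t x * deriv (u t) x
    + β * (u t x) ^ 2 * deriv (fun y => (starRingEnd ℂ) (u t y)) x
    + deriv (deriv (deriv (u t))) x

/-!
On a travelling wave `a f(x - ct)` with real profile `f`, the mKdV equation reduces to
`f''' + κ f² f' = c f'`, where `κ = (α + β)|a|²`. It integrates once to
`f'' = c f - κ f³ / 3 + K`, so only two derivatives of the profile have to be computed.
For `|a|² = c / (α + β)` we have `κ = c`, and the choice `K = -2c/3` makes `f = 1` a double root of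
the right-hand side: `f'' = -(c/3) (f - 1)² (f + 2)`. A solution tending to `1` at infinity is
`f(y) = 1 - 12 / (3 + 2cy²)`.
-/

open scoped ContDiff ComplexConjugate

section TravelingWave

/-- The wave `a f(x - ct)` with complex amplitude `a`, speed `c` and real profile `f`, the ansatz
that reduces the mKdV equation to an ordinary differential equation for `f`. Time comes before
position in the arguments, as in `mkdvLHS`. -/
noncomputable def travelingWave (a : ℂ) (c : ℝ) (f : ℝ → ℝ) (t x : ℝ) : ℂ :=
  a * (f (x - c * t) : ℂ)

variable {f : ℝ → ℝ}

theorem conj_travelingWave (a : ℂ) (c : ℝ) (f : ℝ → ℝ) (t x : ℝ) :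
    conj (travelingWave a c f t x) = travelingWave (conj a) c f t x := by
  simp only [travelingWave, map_mul, Complex.conj_ofReal]

theorem contDiff_uncurry_travelingWave {n : ℕ∞ω} (hf : ContDiff ℝ n f) (a : ℂ) (c : ℝ) :
    ContDiff ℝ n (Function.uncurry (travelingWave a c f)) :=
  contDiff_const.mul (Complex.ofRealCLM.contDiff.comp (hf.comp (by fun_prop)))

theorem deriv_travelingWave (hf : Differentiable ℝ f) (a : ℂ) (c t : ℝ) :
    deriv (travelingWave a c f t) = travelingWave a c (deriv f) t := by
  funext x
  exact (((hf _).hasDerivAt.comp_sub_const x (c * t)).ofReal_comp.const_mul a).deriv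

theorem deriv_travelingWave_time (hf : Differentiable ℝ f) (a : ℂ) (c t x : ℝ) :
    deriv (fun s => travelingWave a c f s x) t = -c * travelingWave a c (deriv f) t x := by
  have phase : HasDerivAt (fun s => x - c * s) (-c) t := by
    simpa using ((hasDerivAt_id t).const_mul c).const_sub x
  have wave := ((hf _).hasDerivAt.comp t phase).ofReal_comp.const_mul a
  refine wave.deriv.trans ?_
  simp only [travelingWave, Complex.ofReal_mul, Complex.ofReal_neg]
  ring

theorem mkdvLHS_travelingWave (hf : ContDiff ℝ 3 f) (α β a : ℂ) (c t x : ℝ) :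
    mkdvLHS α β (travelingWave a c f) t x =
      a * (deriv (deriv (deriv f)) (x - c * t)
        + ((α + β) * ‖a‖ ^ 2 * f (x - c * t) ^ 2 - c) * deriv f (x - c * t)) := by
  have hf' : ContDiff ℝ 2 (deriv f) := hf.deriv'
  have diff : Differentiable ℝ f := hf.differentiable (by norm_num)
  simp only [mkdvLHS, conj_travelingWave, deriv_travelingWave_time diff, deriv_travelingWave diff,
    deriv_travelingWave (hf'.differentiable (by norm_num)),
    deriv_travelingWave hf'.differentiable_deriv_two]
  simp only [travelingWave, ← Complex.conj_mul']
  ring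

theorem mkdvLHS_travelingWave_eq_zero {α β a : ℂ} {c κ K : ℝ} (hf : ContDiff ℝ 3 f)
    (hκ : (α + β) * ‖a‖ ^ 2 = κ)
    (hode : ∀ y, deriv (deriv f) y = c * f y - κ / 3 * f y ^ 3 + K) (t x : ℝ) :
    mkdvLHS α β (travelingWave a c f) t x = 0 := by
  have third (y : ℝ) : deriv (deriv (deriv f)) y = (c - κ * f y ^ 2) * deriv f y := by
    have h := (hf.differentiable (by norm_num) y).hasDerivAt
    rw [funext hode]
    refine (((h.const_mul c).sub ((h.pow 3).const_mul (κ / 3))).add_const K).deriv.trans ?_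
    push_cast
    ring
  rw [mkdvLHS_travelingWave hf, third, hκ]
  push_cast
  ring

end TravelingWave

section RationalProfile

/-- The profile `1 - 12 / (3 + 2cy²)` of the rational solitary wave of speed `c`. -/
noncomputable def rationalProfile (c y : ℝ) : ℝ :=
  1 - 12 / (3 + 2 * c * y ^ 2)

variable {c : ℝ}

theorem contDiff_rationalProfile {n : ℕ∞ω} (hc : 0 ≤ c) : ContDiff ℝ n (rationalProfile c) :=
  contDiff_const.sub (contDiff_const.div (by fun_prop) fun _ => by positivity)

theorem hasDerivAt_three_add_two_mul_mul_sq (c y : ℝ) :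
    HasDerivAt (fun y : ℝ => 3 + 2 * c * y ^ 2) (4 * c * y) y := by
  refine (((hasDerivAt_pow 2 y).const_mul (2 * c)).const_add 3).congr_deriv ?_
  push_cast
  ring

theorem deriv_rationalProfile (hc : 0 ≤ c) :
    deriv (rationalProfile c) = fun y => 48 * c * y / (3 + 2 * c * y ^ 2) ^ 2 := by
  funext y
  have denom_ne_zero : 3 + 2 * c * y ^ 2 ≠ 0 := by positivity
  refine (((hasDerivAt_const y 12).div (hasDerivAt_three_add_two_mul_mul_sq c y)
    denom_ne_zero).const_sub 1).deriv.trans ?_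
  ring

theorem deriv_deriv_rationalProfile (hc : 0 ≤ c) (y : ℝ) :
    deriv (deriv (rationalProfile c)) y =
      c * rationalProfile c y - c / 3 * rationalProfile c y ^ 3 + -(2 * c / 3) := by
  have denom_ne_zero : 3 + 2 * c * y ^ 2 ≠ 0 := by positivity
  rw [deriv_rationalProfile hc]
  refine (((hasDerivAt_id y).const_mul (48 * c)).div
    ((hasDerivAt_three_add_two_mul_mul_sq c y).pow 2) (pow_ne_zero 2 denom_ne_zero)).deriv.trans ?_
  simp only [rationalProfile, id, Pi.pow_apply]
  field_simp
  ring

end RationalProfile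

theorem mul_norm_exp_mul_sqrt_sq {z : ℂ} (him : z.im = 0) (hre : 0 < z.re) {c : ℝ} (hc : 0 ≤ c)
    (φ : ℝ) :
    z * ‖Complex.exp (φ * Complex.I) * (Real.sqrt (c / z.re) : ℂ)‖ ^ 2 = c := by
  lift z to ℝ using him
  rw [Complex.ofReal_re] at hre ⊢
  have norm_sq : ‖Complex.exp (φ * Complex.I) * (Real.sqrt (c / z) : ℂ)‖ ^ 2 = c / z := by
    rw [norm_mul, Complex.norm_exp_ofReal_mul_I, one_mul,
      Complex.norm_of_nonneg (Real.sqrt_nonneg _), Real.sq_sqrt (by positivity)]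
  rw [← Complex.ofReal_pow, norm_sq]
  exact_mod_cast mul_div_cancel₀ c hre.ne'

/-- the rational solitary wave (solitary4) for `Im(α+β) = 0`, `Re(α+β) > 0`. -/
theorem stmt8 (α β : ℂ) (him : (α + β).im = 0) (hre : 0 < (α + β).re)
    (c : ℝ) (hc : 0 < c)
    (φ : ℝ) (hφ : φ ∈ Set.Ico 0 (2 * Real.pi))
    (u : ℝ → ℝ → ℂ)
    (hu : ∀ t x : ℝ, u t x =
      Complex.exp ((φ : ℂ) * Complex.I) * ((Real.sqrt (c / (α + β).re) : ℝ) : ℂ) *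
        (((1 - 12 / (3 + 2 * c * (x - c * t) ^ 2) : ℝ) : ℂ))) :
    ContDiff ℝ (⊤ : ℕ∞) (Function.uncurry u)
      ∧ ∀ t x : ℝ, mkdvLHS α β u t x = 0 := by
  obtain rfl : u = travelingWave _ c (rationalProfile c) := funext₂ hu
  exact ⟨contDiff_uncurry_travelingWave (contDiff_rationalProfile hc.le) _ c,
    mkdvLHS_travelingWave_eq_zero (contDiff_rationalProfile hc.le)
      (mul_norm_exp_mul_sqrt_sq him hre hc.le φ) (deriv_deriv_rationalProfile hc.le)⟩
end

section
/- Let α < 0 be real, β = 0, c < 0, and let Θ ∈ ℝ, φ ∈ [0, 2π). Then the function u(t,x) = e^{iφ}·√(c/α)·( i·tanh Θ + √3·sech Θ·tanh(√(−c/2)·(x − c·t)·sech Θ) ) (where c/α > 0, so √(c/α) is the positive real square root) is smooth on ℝ×ℝ and satisfies the complex mKdV equation u_t + α·conj(u)·u·u_x + u_xxx = 0 at every point (t,x) ∈ ℝ×ℝ. -/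
/-- Hyperbolic secant. -/
noncomputable def sech (x : ℝ) : ℝ := 1 / Real.cosh x

/-!
Along a wave travelling at speed `c` the time derivative is `-c` times the derivative in
`ξ = x - c t`, so the equation becomes an ordinary differential equation for the profile. For the
profile `a + b τ` with `τ = tanh (κ ξ)`, the identity `τ' = κ (1 - τ²)` makes every term a multiple
of `κ (1 - τ²)`, with a cofactor that is a quadratic polynomial in `τ`. Setting its three
coefficients to zero gives algebraic conditions on `a`, `b`, `κ`, `c`, which the kink of the theorem
satisfies because `tanh² Θ + sech² Θ = 1`.
-/

theorem hasDerivAt_tanh (x : ℝ) : HasDerivAt Real.tanh (1 - Real.tanh x ^ 2) x := by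
  have hcosh : Real.cosh x ≠ 0 := (Real.cosh_pos x).ne'
  rw [funext Real.tanh_eq_sinh_div_cosh]
  refine ((Real.hasDerivAt_sinh x).div (Real.hasDerivAt_cosh x) hcosh).congr_deriv ?_
  field_simp

theorem contDiff_tanh {n : WithTop ℕ∞} : ContDiff ℝ n Real.tanh := by
  rw [funext Real.tanh_eq_sinh_div_cosh]
  exact Real.contDiff_sinh.div Real.contDiff_cosh fun x => (Real.cosh_pos x).ne'

theorem tanh_sq_add_sech_sq (x : ℝ) : Real.tanh x ^ 2 + sech x ^ 2 = 1 := by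
  have hcosh : Real.cosh x ≠ 0 := (Real.cosh_pos x).ne'
  rw [sech, Real.tanh_eq_sinh_div_cosh]
  field_simp
  exact (Real.cosh_sq x).symm

section TravellingWave

open scoped ComplexConjugate

theorem deriv_travellingWave_time {E : Type*} [NormedAddCommGroup E] [NormedSpace ℝ E]
    (F : ℝ → E) (c t x : ℝ) :
    deriv (fun s => F (x - c * s)) t = -c • deriv F (x - c * t) := by
  rw [deriv_comp_mul_left c (fun y => F (x - y)), deriv_comp_const_sub, smul_neg, neg_smul]

theorem mkdvLHS_travellingWave (α β : ℂ) (F : ℝ → ℂ) (c t x : ℝ) :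
    mkdvLHS α β (fun t x => F (x - c * t)) t x =
      -c * deriv F (x - c * t)
        + α * conj (F (x - c * t)) * F (x - c * t) * deriv F (x - c * t)
        + β * F (x - c * t) ^ 2 * conj (deriv F (x - c * t))
        + deriv (deriv (deriv F)) (x - c * t) := by
  have deriv_space (G : ℝ → ℂ) : deriv (fun y => G (y - c * t)) = fun y => deriv G (y - c * t) :=
    funext fun y => deriv_comp_sub_const ..
  have deriv_conj : deriv (fun y => conj (F (y - c * t))) x = conj (deriv F (x - c * t)) := by
    simp only [starRingEnd_apply, deriv.star, deriv_space]
  simp only [mkdvLHS, deriv_travellingWave_time, deriv_conj, deriv_space, Complex.real_smul,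
    Complex.ofReal_neg]

theorem contDiff_uncurry_travellingWave {E : Type*} [NormedAddCommGroup E] [NormedSpace ℝ E]
    {n : WithTop ℕ∞} {F : ℝ → E} (hF : ContDiff ℝ n F) (c : ℝ) :
    ContDiff ℝ n (Function.uncurry fun t x => F (x - c * t)) :=
  hF.comp (contDiff_snd.sub (contDiff_const.mul contDiff_fst))

end TravellingWave

section Kink

open scoped ComplexConjugate

/-- The profile of a complex kink, joining `a - b` at `-∞` to `a + b` at `∞` when `κ > 0`. The
argument `ξ` stands for the travelling coordinate `x - c t`. -/
noncomputable def kinkProfile (a b : ℂ) (κ ξ : ℝ) : ℂ := a + b * Real.tanh (κ * ξ)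

variable (a b : ℂ) (κ : ℝ)

theorem contDiff_kinkProfile {n : WithTop ℕ∞} : ContDiff ℝ n (kinkProfile a b κ) :=
  contDiff_const.add (contDiff_const.mul
    (Complex.ofRealCLM.contDiff.comp (contDiff_tanh.comp (contDiff_const.mul contDiff_id))))

theorem hasDerivAt_ofReal_tanh_const_mul (ξ : ℝ) :
    HasDerivAt (fun ξ : ℝ => (Real.tanh (κ * ξ) : ℂ))
      (κ * (1 - (Real.tanh (κ * ξ) : ℂ) ^ 2)) ξ := by
  refine ((hasDerivAt_tanh (κ * ξ)).comp ξ (hasDerivAt_const_mul κ)).ofReal_comp.congr_deriv ?_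
  push_cast
  ring

theorem deriv_kinkProfile :
    deriv (kinkProfile a b κ) = fun ξ => b * κ * (1 - (Real.tanh (κ * ξ) : ℂ) ^ 2) := by
  funext ξ
  refine (((hasDerivAt_ofReal_tanh_const_mul κ ξ).const_mul b).const_add a).deriv.trans ?_
  ring

theorem deriv_deriv_kinkProfile :
    deriv (deriv (kinkProfile a b κ)) =
      fun ξ => -2 * b * κ ^ 2 * (Real.tanh (κ * ξ) - (Real.tanh (κ * ξ) : ℂ) ^ 3) := by
  rw [deriv_kinkProfile]
  funext ξ
  have hτ := hasDerivAt_ofReal_tanh_const_mul κ ξ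
  refine (((hτ.pow 2).const_sub 1).const_mul (b * κ)).deriv.trans ?_
  ring

theorem deriv_deriv_deriv_kinkProfile :
    deriv (deriv (deriv (kinkProfile a b κ))) = fun ξ =>
      -2 * b * κ ^ 3 * (1 - 3 * (Real.tanh (κ * ξ) : ℂ) ^ 2)
        * (1 - (Real.tanh (κ * ξ) : ℂ) ^ 2) := by
  rw [deriv_deriv_kinkProfile]
  funext ξ
  have hτ := hasDerivAt_ofReal_tanh_const_mul κ ξ
  refine ((hτ.sub (hτ.pow 3)).const_mul (-2 * b * κ ^ 2)).deriv.trans ?_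
  ring

variable {a b κ}

-- `h₀`, `h₁`, `h₂` are the coefficients of `1`, `τ`, `τ²` in the cofactor of `κ (1 - τ²)`, the last
-- two divided by `b`.
theorem mkdvLHS_kinkProfile_eq_zero {α β : ℂ} {c : ℝ}
    (h₀ : α * ‖a‖ ^ 2 * b + β * a ^ 2 * conj b = (c + 2 * κ ^ 2) * b)
    (h₁ : α * (conj a * b + a * conj b) + 2 * β * (a * conj b) = 0)
    (h₂ : (α + β) * ‖b‖ ^ 2 = -6 * κ ^ 2) (t x : ℝ) :
    mkdvLHS α β (fun t x => kinkProfile a b κ (x - c * t)) t x = 0 := by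
  rw [← Complex.conj_mul'] at h₀ h₂
  rw [mkdvLHS_travellingWave, deriv_deriv_deriv_kinkProfile, deriv_kinkProfile]
  simp only [kinkProfile, map_add, map_sub, map_mul, map_pow, map_one, Complex.conj_ofReal]
  generalize (Real.tanh (κ * (x - c * t)) : ℂ) = τ
  linear_combination κ * (1 - τ ^ 2) * (h₀ + b * τ * h₁ + b * τ ^ 2 * h₂)

theorem mkdvLHS_orthogonal_kinkProfile_eq_zero {α c p q : ℝ} {ω : ℂ} (hω : ‖ω‖ = 1)
    (hp : α * p ^ 2 = c + 2 * κ ^ 2) (hq : α * q ^ 2 = -6 * κ ^ 2) (t x : ℝ) :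
    mkdvLHS α 0 (fun t x => kinkProfile (ω * (Complex.I * p)) (ω * q) κ (x - c * t)) t x = 0 := by
  have norm_left : ‖ω * (Complex.I * p)‖ ^ 2 = p ^ 2 := by simp [hω]
  have norm_right : ‖ω * (q : ℂ)‖ ^ 2 = q ^ 2 := by simp [hω]
  apply mkdvLHS_kinkProfile_eq_zero
  · rw [zero_mul, zero_mul, add_zero]
    congr 1
    exact_mod_cast norm_left ▸ hp
  · simp only [map_mul, Complex.conj_I, Complex.conj_ofReal]
    ring
  · rw [add_zero]
    exact_mod_cast norm_right ▸ hq

end Kink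

/-- the complex kink (kink2) for `α < 0` real, `β = 0`, `c < 0`. -/
theorem stmt11 (α : ℝ) (hα : α < 0) (c : ℝ) (hc : c < 0)
    (Θ φ : ℝ) (hφ : φ ∈ Set.Ico 0 (2 * Real.pi))
    (u : ℝ → ℝ → ℂ)
    (hu : ∀ t x : ℝ, u t x =
      Complex.exp ((φ : ℂ) * Complex.I) * ((Real.sqrt (c / α) : ℝ) : ℂ) *
        (Complex.I * ((Real.tanh Θ : ℝ) : ℂ)
          + ((Real.sqrt 3 * sech Θ
              * Real.tanh (Real.sqrt (-c / 2) * (x - c * t) * sech Θ) : ℝ) : ℂ))) :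
    ContDiff ℝ (⊤ : ℕ∞) (Function.uncurry u)
      ∧ ∀ t x : ℝ, mkdvLHS (α : ℂ) 0 u t x = 0 := by
  set A := Real.sqrt (c / α)
  set k := Real.sqrt (-c / 2)
  set ω := Complex.exp ((φ : ℂ) * Complex.I)
  have hA : α * A ^ 2 = c := by
    rw [Real.sq_sqrt (div_nonneg_of_nonpos hc.le hα.le), mul_div_cancel₀ c hα.ne]
  have hk : k ^ 2 = -c / 2 := Real.sq_sqrt (by linarith)
  have h_three : Real.sqrt 3 ^ 2 = 3 := Real.sq_sqrt zero_le_three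
  have hp : α * (A * Real.tanh Θ) ^ 2 = c + 2 * (k * sech Θ) ^ 2 := by
    linear_combination Real.tanh Θ ^ 2 * hA - 2 * sech Θ ^ 2 * hk + c * tanh_sq_add_sech_sq Θ
  have hq : α * (A * (Real.sqrt 3 * sech Θ)) ^ 2 = -6 * (k * sech Θ) ^ 2 := by
    linear_combination 3 * sech Θ ^ 2 * hA + α * A ^ 2 * sech Θ ^ 2 * h_three
      + 6 * sech Θ ^ 2 * hk
  have hu_kink : u = fun t x => kinkProfile (ω * (Complex.I * (A * Real.tanh Θ : ℝ)))
      (ω * (A * (Real.sqrt 3 * sech Θ) : ℝ)) (k * sech Θ) (x - c * t) := by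
    funext t x
    rw [hu, kinkProfile, mul_right_comm k]
    push_cast
    ring
  rw [hu_kink]
  exact ⟨contDiff_uncurry_travellingWave (contDiff_kinkProfile ..) c,
    mkdvLHS_orthogonal_kinkProfile_eq_zero (Complex.norm_exp_ofReal_mul_I φ) hp hq⟩
end
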